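/- For any integer n ≥ 1 and any one-dimensional complex representation ρ of SL(2, ℤ/nℤ), the value ρ(t) is a 12th root of unity; moreover, a one-dimensional complex representation of SL(2, ℤ/nℤ) is uniquely determined by its value at t, i.e., if ρ and ρ′ are one-dimensional representations with ρ(t) = ρ′(t), then ρ = ρ′. -/

import Mathlib

/-- The group `SL(2, ℤ/nℤ)`. -/
abbrev SL2 (n : ℕ) := Matrix.SpecialLinearGroup (Fin 2) (ZMod n)

/-- The element `t = [[1,1],[0,1]]` of `SL(2, ℤ/nℤ)`. -/
def tGen (n : ℕ) : SL2 n := ⟨!![1, 1; 0, 1], by simp [Matrix.det_fin_two_of]⟩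

/-- A representation is irreducible if the space is nonzero and the only invariant
subspaces are `⊥` and `⊤`. -/
def IsIrreducibleRep {G V : Type} [Group G] [AddCommGroup V] [Module ℂ V]
    (ρ : Representation ℂ G V) : Prop :=
  Nontrivial V ∧ ∀ p : Submodule ℂ V, (∀ g : G, p.map (ρ g) ≤ p) → p = ⊥ ∨ p = ⊤

/-- The upper unipotent matrix. -/
def uMat (n : ℕ) (x : ZMod n) : SL2 n := ⟨!![1, x; 0, 1], by simp [Matrix.det_fin_two_of]⟩

/-- The element `s`. -/
def sGen (n : ℕ) : SL2 n := ⟨!![0, -1; 1, 0], by simp [Matrix.det_fin_two_of]⟩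

lemma coe_u (n : ℕ) (x : ZMod n) :
    (uMat n x : Matrix (Fin 2) (Fin 2) (ZMod n)) = !![1, x; 0, 1] := rfl

lemma coe_t (n : ℕ) : (tGen n : Matrix (Fin 2) (Fin 2) (ZMod n)) = !![1, 1; 0, 1] := rfl

lemma coe_s (n : ℕ) : (sGen n : Matrix (Fin 2) (Fin 2) (ZMod n)) = !![0, -1; 1, 0] := rfl

lemma tGen_pow (n k : ℕ) : tGen n ^ k = uMat n (k : ZMod n) := by
  induction k with
  | zero =>
    ext i j
    fin_cases i <;> fin_cases j <;> simp [coe_u]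
  | succ k ih =>
    rw [pow_succ, ih]
    ext i j
    fin_cases i <;> fin_cases j <;>
      simp [coe_u, coe_t, Matrix.mul_apply, Fin.sum_univ_two, add_comm]

lemma uMat_mem (n : ℕ) [NeZero n] (H : Subgroup (SL2 n)) (ht : tGen n ∈ H) (x : ZMod n) :
    uMat n x ∈ H := by
  have h := H.pow_mem ht x.val
  rwa [tGen_pow, ZMod.natCast_zmod_val] at h

lemma mem_of_tri (n : ℕ) [NeZero n] (H : Subgroup (SL2 n)) (ht : tGen n ∈ H) (hs : sGen n ∈ H)
    (g : SL2 n) (hg : g 1 0 = 0) : g ∈ H := by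
  have hdet : g 0 0 * g 1 1 = 1 := by
    have h := g.det_coe
    rw [Matrix.det_fin_two, hg] at h
    simpa using h
  have key : g = uMat n (g 0 0) * (sGen n * uMat n (g 1 1) * (sGen n * sGen n * sGen n)) *
      uMat n (g 0 0) * sGen n * uMat n (g 1 1 * g 0 1) := by
    ext i j
    fin_cases i <;> fin_cases j <;>
      simp [coe_u, coe_s, Matrix.mul_apply, Fin.sum_univ_two, hg] <;> grind
  rw [key]
  have hu := uMat_mem n H ht
  exact H.mul_mem (H.mul_mem (H.mul_mem (H.mul_mem (hu _) (H.mul_mem (H.mul_mem hs (hu _))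
    (H.mul_mem (H.mul_mem hs hs) hs))) (hu _)) hs) (hu _)

lemma mem_of_gens (n : ℕ) [NeZero n] (H : Subgroup (SL2 n)) (ht : tGen n ∈ H) (hs : sGen n ∈ H)
    (c : ℕ) : ∀ g : SL2 n, g 1 0 = (c : ZMod n) → g ∈ H := by
  induction c using Nat.strong_induction_on with
  | _ c ih =>
    intro g hg
    rcases Nat.eq_zero_or_pos c with rfl | hc
    · exact mem_of_tri n H ht hs g (by simpa using hg)
    · have h1 : sGen n * uMat n (-(((g 0 0).val / c : ℕ) : ZMod n)) * g ∈ H := by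
        apply ih _ (Nat.mod_lt (g 0 0).val hc)
        have h2 : ((c * ((g 0 0).val / c) + (g 0 0).val % c : ℕ) : ZMod n) = g 0 0 := by
          rw [Nat.div_add_mod, ZMod.natCast_zmod_val]
        rw [Nat.cast_add, Nat.cast_mul] at h2
        simp [coe_u, coe_s, Matrix.mul_apply, Fin.sum_univ_two, hg]
        linear_combination -h2
      exact (H.mul_mem_cancel_left (H.mul_mem hs (uMat_mem n H ht _))).1 h1

lemma rel_s (n : ℕ) : sGen n ^ 4 = 1 := by
  ext i j
  fin_cases i <;> fin_cases j <;>
    simp [coe_s, pow_succ, Matrix.mul_apply, Fin.sum_univ_two]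

lemma rel_st (n : ℕ) : (sGen n * tGen n) ^ 3 = sGen n ^ 2 := by
  ext i j
  fin_cases i <;> fin_cases j <;>
    simp [coe_s, coe_t, pow_succ, Matrix.mul_apply, Fin.sum_univ_two]

lemma char_s (n : ℕ) (ρ : SL2 n →* ℂˣ) : ρ (sGen n) = (ρ (tGen n) ^ 3)⁻¹ := by
  have h := congrArg ρ (rel_st n)
  simp only [map_pow, map_mul, mul_pow] at h
  rw [pow_succ (ρ (sGen n)) 2, mul_assoc, mul_eq_left] at h
  exact eq_inv_of_mul_eq_one_left h

/-- Any one-dimensional complex representation `ρ` of `SL(2, ℤ/nℤ)` (i.e. a homomorphism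
to `ℂˣ`) sends `t` to a 12th root of unity, and is uniquely determined by its value at `t`. -/
theorem stmt4 (n : ℕ) (hn : 1 ≤ n) (ρ : SL2 n →* ℂˣ) :
    ((ρ (tGen n) : ℂ) ^ 12 = 1) ∧
    (∀ ρ' : SL2 n →* ℂˣ, ρ (tGen n) = ρ' (tGen n) → ρ = ρ') := by
  have : NeZero n := ⟨by omega⟩
  constructor
  · have h := congrArg ρ (rel_s n)
    rw [map_pow, char_s, map_one, inv_pow, inv_eq_one, ← pow_mul] at h
    simpa using congrArg Units.val h
  · intro ρ' h
    have hs : ρ (sGen n) = ρ' (sGen n) := by rw [char_s, char_s, h]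
    ext1 g
    exact mem_of_gens n (ρ.eqLocus ρ') h hs (g 1 0).val g (ZMod.natCast_zmod_val _).symm
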